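/- arXiv:1703.01581 — 3 statements merged into one kernel-verified Lean document; each statement's English description precedes it below -/
import Mathlib

section
/- Let r, k ∈ ℕ and let ℕ = A₁ ∪ A₂ ∪ … ∪ A_r be a finite partition of the positive integers. Then there exist s ∈ {1, 2, …, r} and a, b, d ∈ A_s such that {b·(a + i·d)^j : i, j ∈ {0, 1, …, k}} ∪ {b·d^j : j ∈ {0, 1, …, k}} ∪ {a + i·d : i ∈ {0, 1, …, k}} ⊆ A_s. -/
theorem geo_words (k : ℕ) (κ : Type) [Finite κ] (r : ℕ) : ∃ n K : ℕ,
    ∀ (χ : (Fin n → ℕ) → κ) (C : Finset κ), C.card ≤ r →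
      (∀ w : Fin n → ℕ, (∀ t, w t ≤ K) → (∃ t, w t = 1) → χ w ∈ C) →
      ∃ (b w : Fin n → ℕ) (t : Fin n), w t = 1 ∧ b t = 0 ∧ b ≠ 0 ∧
        ∀ j ≤ k, χ (b + j • w) = χ w := by
  classical
  induction r with
  | zero =>
    refine ⟨1, 1, fun χ C hC h => ?_⟩
    have h1 := h (fun _ => 1) (by simp) ⟨0, rfl⟩
    have : C = ∅ := by simpa using hC
    simp [this] at h1
  | succ r ih =>
    obtain ⟨n, K, hn⟩ := ih
    obtain ⟨m, hm⟩ := Combinatorics.Subspace.exists_mono_in_high_dimension_fin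
      (Fin (k * K + 1)) κ (Fin n)
    refine ⟨m + 1, k * K + K + 1, fun χ C hC h => ?_⟩
    obtain ⟨l, c, hl⟩ := hm (fun v => χ (Fin.cons 1 (fun i => (v i : ℕ))))
    let φ : (Fin n → ℕ) → (Fin (m+1) → ℕ) := fun w =>
      Fin.cons 0 (fun i => (l.idxFun i).elim (fun _ => 0) w)
    let b0 : Fin (m+1) → ℕ := Fin.cons 1 (fun i => (l.idxFun i).elim (fun a : Fin (k * K + 1) => a.val) (fun _ => 0))
    have hadd : ∀ (b w : Fin n → ℕ) (j : ℕ), φ (b + j • w) = φ b + j • φ w := by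
      intro b w j
      ext i
      refine Fin.cases ?_ (fun i => ?_) i
      · simp [φ]
      · simp only [φ, Fin.cons_succ, Pi.add_apply, Pi.smul_apply]
        cases l.idxFun i <;> simp
    have hmono : ∀ w : Fin n → ℕ, (∀ t, w t ≤ k * K) → χ (b0 + φ w) = c := by
      intro w hw
      rw [← hl (fun t => ⟨w t, Nat.lt_succ_of_le (hw t)⟩)]
      congr 1
      ext i
      refine Fin.cases ?_ (fun i => ?_) i
      · simp [φ, b0]
      · simp only [φ, b0, Fin.cons_succ, Pi.add_apply, Combinatorics.Subspace.apply_def]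
        cases l.idxFun i <;> simp
    have hcoord : ∀ t : Fin n, ∃ i : Fin (m+1), b0 i = 0 ∧ ∀ w, φ w i = w t := by
      intro t
      obtain ⟨i, hi⟩ := l.proper t
      exact ⟨i.succ, by simp [b0, hi], fun w => by simp [φ, hi]⟩
    have hle : ∀ (w : Fin n → ℕ) B, (∀ t, w t ≤ B) → ∀ i, φ w i ≤ B := by
      intro w B hw i
      refine Fin.cases ?_ (fun i => ?_) i
      · simp [φ]
      · simp only [φ, Fin.cons_succ]
        cases l.idxFun i <;> simp [hw]
    by_cases hc : ∃ w : Fin n → ℕ, (∀ t, w t ≤ K) ∧ (∃ t, w t = 1) ∧ χ (φ w) = c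
    · obtain ⟨w, hwK, ⟨t, ht⟩, hwc⟩ := hc
      obtain ⟨i, hi0, hi⟩ := hcoord t
      refine ⟨b0, φ w, i, by rw [hi, ht], hi0, ?_, fun j hj => ?_⟩
      · intro h0
        have := congrFun h0 0
        simp [b0] at this
      · rw [hwc, ← hmono (j • w) (fun t => ?_)]
        · have := hadd 0 w j
          have h0 : φ 0 = 0 := by
            ext i
            have := hle 0 0 (by simp) i
            simpa using this
          rw [zero_add, h0, zero_add] at this
          rw [this]
        · simpa using Nat.mul_le_mul hj (hwK t)
    · have hcC : c ∈ C := by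
        rw [← hmono 0 (by simp)]
        apply h
        · intro t
          refine Fin.cases ?_ (fun i => ?_) t
          · simp [φ, b0]
          · simp only [φ, b0, Fin.cons_succ, Pi.add_apply]
            cases hh : l.idxFun i with
            | inl a => have := a.2; simp; omega
            | inr a => simp
        · exact ⟨0, by simp [φ, b0]⟩
      obtain ⟨b, w, t, hwt, hbt, hb, hj⟩ := hn (χ ∘ φ) (C.erase c)
        (by rw [Finset.card_erase_of_mem hcC]; omega) (by
          intro w hw hw1
          refine Finset.mem_erase.2 ⟨fun h' => hc ⟨w, hw, hw1, h'⟩, ?_⟩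
          apply h
          · intro t
            have := hle w K hw t
            omega
          · obtain ⟨t, ht⟩ := hw1
            obtain ⟨i, _, hi⟩ := hcoord t
            exact ⟨i, by rw [hi, ht]⟩)
      obtain ⟨i, _, hi⟩ := hcoord t
      refine ⟨φ b, φ w, i, by rw [hi, hwt], by rw [hi, hbt], ?_, fun j hjk => ?_⟩
      · intro h0
        apply hb
        ext s
        obtain ⟨i, _, hi⟩ := hcoord s
        rw [← hi b, h0]; rfl
      · rw [← hadd]; exact hj j hjk

theorem geo_words' (k : ℕ) (κ : Type) [Finite κ] : ∃ n : ℕ,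
    ∀ (χ : (Fin n → ℕ) → κ),
      ∃ (b w : Fin n → ℕ) (t : Fin n), w t = 1 ∧ b t = 0 ∧ b ≠ 0 ∧
        ∀ j ≤ k, χ (b + j • w) = χ w := by
  classical
  have := Fintype.ofFinite κ
  obtain ⟨n, K, h⟩ := geo_words k κ (Fintype.card κ)
  exact ⟨n, fun χ => h χ Finset.univ le_rfl (by simp)⟩

/-- Brauer configurations -/
def GeoQ (k : ℕ) (F : Finset ℕ+) : Prop :=
  ∃ a d : ℕ+, d ∈ F ∧ ∀ i ≤ k, ∃ x ∈ F, (x : ℕ) = a + i * d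

theorem geo_brauer (k : ℕ) (κ : Type) [Finite κ] (f : ℕ+ → κ) :
    ∃ F : Finset ℕ+, GeoQ k F ∧ ∃ c, ∀ x ∈ F, f x = c := by
  classical
  obtain ⟨n, hn⟩ := geo_words' k κ
  obtain ⟨b, w, t, hw, hb, hb0, h⟩ := hn (fun w => f (Nat.toPNat' (∑ i, w i)))
  have hbp : 0 < ∑ i, b i := by
    rw [Nat.pos_iff_ne_zero]
    intro h0
    apply hb0
    ext i
    simpa using (Finset.sum_eq_zero_iff.1 h0) i (Finset.mem_univ i)
  have hwp : 0 < ∑ i, w i :=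
    lt_of_lt_of_le (by omega : 0 < w t) (Finset.single_le_sum (by simp) (Finset.mem_univ t))
  let a : ℕ+ := ⟨∑ i, b i, hbp⟩
  let d : ℕ+ := ⟨∑ i, w i, hwp⟩
  have hd : Nat.toPNat' (∑ i, w i) = d := by
    apply PNat.eq; simp [d, Nat.toPNat'_coe, hwp]
  let g : ℕ → ℕ+ := fun i => ⟨∑ s, b s + i * ∑ s, w s, by positivity⟩
  refine ⟨insert d ((Finset.range (k+1)).image g), ⟨a, d, by simp, fun i hi => ⟨g i, ?_, rfl⟩⟩,
    f d, ?_⟩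
  · exact Finset.mem_insert_of_mem (Finset.mem_image_of_mem _ (by simp; omega))
  · intro x hx
    rcases Finset.mem_insert.1 hx with rfl | hx
    · rfl
    · obtain ⟨i, hi, rfl⟩ := Finset.mem_image.1 hx
      have := h i (by simp at hi; omega)
      simp only [hd] at this
      rw [← this]
      congr 1
      apply PNat.eq
      have hp : 0 < ∑ s, b s + i * ∑ s, w s := by positivity
      simp only [Pi.add_apply, Pi.smul_apply, smul_eq_mul, Finset.sum_add_distrib,
        ← Finset.mul_sum]
      rw [Nat.toPNat'_coe, if_pos hp]
      rfl

theorem geo_ultra (k : ℕ) : ∃ p : Ultrafilter ℕ+, ∀ S ∈ p, ∃ F : Finset ℕ+,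
    (↑F : Set ℕ+) ⊆ S ∧ GeoQ k F := by
  classical
  obtain ⟨p, hp⟩ := Ultrafilter.exists_ultrafilter_of_finite_inter_nonempty
    {T : Set ℕ+ | ¬ ∃ F : Finset ℕ+, (↑F : Set ℕ+) ⊆ Tᶜ ∧ GeoQ k F} (by
      intro T hT
      obtain ⟨F, hF, c, hc⟩ := geo_brauer k (T → Prop) (fun x S => x ∈ S.1)
      have hF' := hF
      obtain ⟨a, d, hd, -⟩ := hF'
      refine ⟨d, ?_⟩
      rw [Set.mem_sInter]
      intro S hS
      by_contra hdS
      refine hT hS ⟨F, fun x hx hxS => hdS ?_, hF⟩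
      have h1 := congrFun ((hc x hx).trans (hc d hd).symm) ⟨S, hS⟩
      simp only at h1
      exact h1 ▸ hxS)
  refine ⟨p, fun S hS => ?_⟩
  by_contra hne
  have : Sᶜ ∈ p := hp (by simpa using hne)
  exact Ultrafilter.compl_mem_iff_notMem.1 this hS

noncomputable def geoU (p : Ultrafilter ℕ+) : (n : ℕ) → Ultrafilter (Fin n → ℕ+)
  | 0 => pure (fun _ => 1)
  | n + 1 => Ultrafilter.bind p (fun y => (geoU p n).map (fun v => (Fin.cons y v : Fin (n+1) → ℕ+)))

theorem geo_select (k : ℕ) (p : Ultrafilter ℕ+) (hp : ∀ S ∈ p, ∃ F : Finset ℕ+,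
    (↑F : Set ℕ+) ⊆ S ∧ GeoQ k F) (n : ℕ) (P : Set (Fin n → ℕ+)) (hP : P ∈ geoU p n) (t : Fin n) :
    ∃ F : Finset ℕ+, GeoQ k F ∧ ∃ v : Fin n → ℕ+, ∀ x ∈ F, Function.update v t x ∈ P := by
  induction n with
  | zero => exact t.elim0
  | succ n ih =>
    have h1 : {y | {v : Fin n → ℕ+ | (Fin.cons y v : Fin (n+1) → ℕ+) ∈ P} ∈ geoU p n} ∈ p := hP
    obtain ⟨F, hF, hQ⟩ := hp _ h1
    rcases Fin.eq_zero_or_eq_succ t with rfl | ⟨t, rfl⟩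
    · have h2 : (⋂ x ∈ F, {v : Fin n → ℕ+ | (Fin.cons x v : Fin (n+1) → ℕ+) ∈ P}) ∈ geoU p n :=
        (Filter.biInter_finset_mem F).2 (fun x hx => hF hx)
      obtain ⟨v, hv⟩ := (geoU p n).nonempty_of_mem h2
      refine ⟨F, hQ, Fin.cons 1 v, fun x hx => ?_⟩
      rw [Fin.update_cons_zero]
      exact Set.mem_iInter₂.1 hv x hx
    · obtain ⟨a, d, hd, -⟩ := hQ
      obtain ⟨F', hQ', v, hv⟩ := ih _ (hF hd) t
      refine ⟨F', hQ', Fin.cons d v, fun x hx => ?_⟩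
      rw [← Fin.cons_update]
      exact hv x hx

theorem geo_arithmetic_partition (r k : ℕ) (A : Fin r → Set ℕ)
    (hApos : ∀ i : Fin r, ∀ n ∈ A i, 0 < n)
    (hAcover : ∀ n : ℕ, 0 < n → ∃ i : Fin r, n ∈ A i) :
    ∃ (s : Fin r) (a b d : ℕ), a ∈ A s ∧ b ∈ A s ∧ d ∈ A s ∧
      (∀ i j : ℕ, i ≤ k → j ≤ k → b * (a + i * d) ^ j ∈ A s) ∧
      (∀ j : ℕ, j ≤ k → b * d ^ j ∈ A s) ∧
      (∀ i : ℕ, i ≤ k → a + i * d ∈ A s) := by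
  classical
  have hcol : ∀ x : ℕ+, ∃ i : Fin r, (x : ℕ) ∈ A i := fun x => hAcover x x.pos
  choose col hcol using hcol
  obtain ⟨n, hn⟩ := geo_words' k (Fin r)
  obtain ⟨p, hp⟩ := geo_ultra k
  have hχ : ∀ w : Fin n → ℕ, ∃ c : Fin r, {v : Fin n → ℕ+ | col (∏ i, v i ^ w i) = c} ∈ geoU p n := by
    intro w
    have h : (⋃ c ∈ (Set.univ : Set (Fin r)), {v : Fin n → ℕ+ | col (∏ i, v i ^ w i) = c})
        ∈ geoU p n := by
      refine Filter.mem_of_superset Filter.univ_mem (fun v _ => ?_)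
      simp
    obtain ⟨c, -, hc⟩ := (Ultrafilter.finite_biUnion_mem_iff Set.finite_univ).1 h
    exact ⟨c, hc⟩
  choose χ hχ using hχ
  obtain ⟨b, w, t, hw, hb, -, h⟩ := hn χ
  have hP : {v : Fin n → ℕ+ | col (∏ i, v i ^ w i) = χ w} ∩
      (⋂ j ∈ Finset.range (k+1), {v : Fin n → ℕ+ | col (∏ i, v i ^ (b + j • w) i) = χ w})
      ∈ geoU p n := by
    refine Filter.inter_mem (hχ w) ((Filter.biInter_finset_mem _).2 (fun j hj => ?_))
    rw [← h j (by simp at hj; omega)]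
    exact hχ _
  obtain ⟨F, ⟨a, d, hd, hF⟩, v, hv⟩ := geo_select k p hp n _ hP t
  let B : ℕ+ := ∏ i ∈ Finset.univ.erase t, v i ^ b i
  let c : ℕ+ := ∏ i ∈ Finset.univ.erase t, v i ^ w i
  have hprod : ∀ (u : Fin n → ℕ) (x : ℕ+), ∏ i, (Function.update v t x) i ^ u i
      = x ^ u t * ∏ i ∈ Finset.univ.erase t, v i ^ u i := by
    intro u x
    rw [← Finset.mul_prod_erase _ _ (Finset.mem_univ t)]
    congr 1
    · simp
    · refine Finset.prod_congr rfl (fun i hi => ?_)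
      rw [Function.update_of_ne (Finset.ne_of_mem_erase hi)]
  have h1 : ∀ x ∈ F, ((c * x : ℕ+) : ℕ) ∈ A (χ w) := by
    intro x hx
    have h2 : col _ = χ w := (hv x hx).1
    rw [hprod, hw, pow_one, mul_comm] at h2
    rw [← h2]
    exact hcol _
  have h2 : ∀ x ∈ F, ∀ j ≤ k, ((B * (c * x) ^ j : ℕ+) : ℕ) ∈ A (χ w) := by
    intro x hx j hj
    have h3 : col _ = χ w := Set.mem_iInter₂.1 (hv x hx).2 j (by simp; omega)
    rw [hprod] at h3
    have h4 : x ^ (b + j • w) t * ∏ i ∈ Finset.univ.erase t, v i ^ (b + j • w) i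
        = B * (c * x) ^ j := by
      simp only [Pi.add_apply, Pi.smul_apply, hb, hw, pow_add, Finset.prod_mul_distrib, B, c,
        mul_pow, ← Finset.prod_pow, ← pow_mul, smul_eq_mul]
      simp only [mul_one, pow_zero, one_mul, mul_comm, mul_left_comm]
    rw [h4] at h3
    rw [← h3]
    exact hcol _
  have h3 : ∀ i ≤ k, ∃ x ∈ F, ((c * x : ℕ+) : ℕ) = c * a + i * (c * d) := by
    intro i hi
    obtain ⟨x, hx, hxe⟩ := hF i hi
    exact ⟨x, hx, by rw [PNat.mul_coe, hxe]; ring⟩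
  refine ⟨χ w, c * a, B, c * d, ?_, ?_, ?_, ?_, ?_, ?_⟩
  · obtain ⟨x, hx, hxe⟩ := h3 0 (Nat.zero_le _)
    have := h1 x hx
    rw [hxe] at this
    simpa using this
  · simpa using h2 d hd 0 (Nat.zero_le _)
  · simpa using h1 d hd
  · intro i j hi hj
    obtain ⟨x, hx, hxe⟩ := h3 i hi
    have := h2 x hx j hj
    rwa [PNat.mul_coe, PNat.pow_coe, hxe] at this
  · intro j hj
    simpa using h2 d hd j hj
  · intro i hi
    obtain ⟨x, hx, hxe⟩ := h3 i hi
    have := h1 x hx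
    rwa [hxe] at this
end

section
/- Let ⟨xₙ⟩ₙ₌₁^∞ be a sequence in ℕ and let A be an IP* set in (ℕ, +). Then there exists a sum subsystem ⟨yₙ⟩ₙ₌₁^∞ of ⟨xₙ⟩ₙ₌₁^∞ such that FS(⟨yₙ⟩ₙ₌₁^∞) ∪ FP(⟨yₙ⟩ₙ₌₁^∞) ⊆ A. -/
/-- The semigroup operation `+` on ultrafilters: `A ∈ p + q` iff
`{x : {y : x + y ∈ A} ∈ q} ∈ p`. -/
def uadd (p q : Ultrafilter ℕ) : Ultrafilter ℕ :=
  p.bind fun x => q.map fun y => x + y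

/-- Finite sums of distinct terms of a sequence. -/
def FS (x : ℕ → ℕ) : Set ℕ :=
  {s | ∃ H : Finset ℕ, H.Nonempty ∧ s = ∑ t ∈ H, x t}

/-- Finite products of distinct terms of a sequence. -/
def FP (x : ℕ → ℕ) : Set ℕ :=
  {s | ∃ H : Finset ℕ, H.Nonempty ∧ s = ∏ t ∈ H, x t}

/-- `y` is a sum subsystem of `x`: there are nonempty finite sets `Hₙ` with
`max Hₙ < min Hₙ₊₁` and `yₙ = ∑_{t ∈ Hₙ} x_t`. -/
def SumSubsystem (y x : ℕ → ℕ) : Prop :=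
  ∃ H : ℕ → Finset ℕ, (∀ n, (H n).Nonempty) ∧
    (∀ n, ∀ i ∈ H n, ∀ j ∈ H (n + 1), i < j) ∧
    (∀ n, y n = ∑ t ∈ H n, x t)

/-- `A` is an IP* set in the positive integers `(ℕ, +)`: it belongs to every
idempotent ultrafilter on the positive integers (encoded as idempotent ultrafilters on ℕ
containing the set of positive integers). -/
def IPStar (A : Set ℕ) : Prop :=
  ∀ p : Ultrafilter ℕ, {n : ℕ | 0 < n} ∈ p → uadd p p = p → A ∈ p

open Filter

attribute [local instance] Ultrafilter.add Ultrafilter.addSemigroup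

/-- finite sums with indices at least `n`. -/
def TailFS (x : ℕ → ℕ) (n : ℕ) : Set ℕ :=
  {s | ∃ H : Finset ℕ, H.Nonempty ∧ (∀ i ∈ H, n ≤ i) ∧ s = ∑ t ∈ H, x t}

theorem uadd_eq_add (p q : Ultrafilter ℕ) : uadd p q = p + q := by
  apply Ultrafilter.coe_inj.mp
  exact Filter.ext' fun P => Iff.rfl

theorem mem_uadd (p q : Ultrafilter ℕ) (A : Set ℕ) :
    A ∈ uadd p q ↔ {x : ℕ | {y : ℕ | x + y ∈ A} ∈ q} ∈ p := Iff.rfl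

theorem exists_idem_tail (x : ℕ → ℕ) :
    ∃ U : Ultrafilter ℕ, uadd U U = U ∧ ∀ n, TailFS x n ∈ U := by
  let S : Set (Ultrafilter ℕ) := ⋂ n, { U | TailFS x n ∈ U }
  have h := exists_idempotent_in_compact_add_subsemigroup
    (@Ultrafilter.continuous_add_left ℕ _) S ?_ ?_ ?_
  · rcases h with ⟨U, hU, U_idem⟩
    exact ⟨U, (uadd_eq_add U U).trans U_idem, fun n => Set.mem_iInter.mp hU n⟩
  · apply IsCompact.nonempty_iInter_of_sequence_nonempty_isCompact_isClosed
    · intro n U hU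
      refine mem_of_superset (show TailFS x (n+1) ∈ U from hU) ?_
      rintro s ⟨H, h1, h2, h3⟩
      exact ⟨H, h1, fun i hi => by have := h2 i hi; omega, h3⟩
    · intro n
      exact ⟨pure (x n), mem_pure.mpr ⟨{n}, by simp, by simp, by simp⟩⟩
    · exact (ultrafilter_isClosed_basic _).isCompact
    · intro n
      apply ultrafilter_isClosed_basic
  · exact IsClosed.isCompact (isClosed_iInter fun i => ultrafilter_isClosed_basic _)
  · intro U hU V hV
    rw [Set.mem_iInter] at *
    intro n
    change TailFS x n ∈ U + V
    rw [← uadd_eq_add, mem_uadd]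
    refine mem_of_superset (show TailFS x n ∈ U from hU n) ?_
    rintro m ⟨H, h1, h2, h3⟩
    refine mem_of_superset (show TailFS x (n + H.sup id + 1) ∈ V from hV _) ?_
    rintro m' ⟨K, k1, k2, k3⟩
    refine ⟨H ∪ K, h1.mono Finset.subset_union_left, ?_, ?_⟩
    · intro i hi
      rcases Finset.mem_union.mp hi with hi | hi
      · exact h2 i hi
      · have := k2 i hi
        omega
    · rw [Finset.sum_union, h3, k3]
      rw [Finset.disjoint_left]
      intro i hi hk
      have a1 := k2 i hk
      have a2 : i ≤ H.sup id := Finset.le_sup (f := id) hi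
      omega

theorem IPStar.scale {A : Set ℕ} (hA : IPStar A) {n : ℕ} (hn : 0 < n) :
    IPStar {m | n * m ∈ A} := by
  intro p hp hpp
  have h : A ∈ p.map (fun m => n * m) := by
    apply hA
    · change {m : ℕ | 0 < n * m} ∈ p
      refine mem_of_superset hp ?_
      intro m hm
      exact Nat.mul_pos hn hm
    · apply Ultrafilter.ext
      intro B
      have h1 : {m | n * m ∈ B} ∈ uadd p p ↔ {m | n * m ∈ B} ∈ p := by rw [hpp]
      rw [mem_uadd] at h1 ⊢
      simp only [Set.mem_ofPred_eq, mul_add] at h1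
      exact h1
  exact h

theorem IPStar.and {A B : Set ℕ} (hA : IPStar A) (hB : IPStar B) : IPStar (A ∩ B) :=
  fun p h1 h2 => inter_mem (hA p h1 h2) (hB p h1 h2)

@[to_additive]
theorem prod_mem_chain {M : Type} [CommMonoid M] (y : ℕ → M) (B : ℕ → Set M)
    (h0 : ∀ n, y n ∈ B n) (h1 : ∀ n, B (n+1) ⊆ B n ∩ {m | y n * m ∈ B n})
    (H : Finset ℕ) : H.Nonempty → ∀ n, (∀ i ∈ H, n ≤ i) → ∏ t ∈ H, y t ∈ B n := by
  have anti : Antitone B := antitone_nat_of_succ_le fun n => (h1 n).trans Set.inter_subset_left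
  induction H using Finset.induction_on_min with
  | empty => intro h; simp at h
  | insert a s ha ih =>
    intro _ n hn
    apply anti (hn a (Finset.mem_insert_self _ _))
    rw [Finset.prod_insert (fun h => lt_irrefl _ (ha a h))]
    rcases s.eq_empty_or_nonempty with h | h
    · subst h
      simpa using h0 a
    · exact (h1 a (ih h (a+1) (fun i hi => ha i hi))).2

/-- For every sequence `⟨xₙ⟩` in the positive integers and every IP* set `A`
in `(ℕ, +)`, there is a sum subsystem `⟨yₙ⟩` of `⟨xₙ⟩` with `FS(⟨yₙ⟩) ∪ FP(⟨yₙ⟩) ⊆ A`. -/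
theorem ipstar_sum_subsystem (x : ℕ → ℕ) (hx : ∀ n, 0 < x n)
    (A : Set ℕ) (hA : IPStar A) :
    ∃ y : ℕ → ℕ, SumSubsystem y x ∧ FS y ∪ FP y ⊆ A := by
  obtain ⟨p, hp, hT⟩ := exists_idem_tail x
  have hpos : {n : ℕ | 0 < n} ∈ p := by
    refine mem_of_superset (hT 0) ?_
    rintro s ⟨H, h1, -, rfl⟩
    exact Finset.sum_pos (fun i _ => hx i) h1
  let St := {s : Set ℕ × Set ℕ × Finset ℕ // s.1 ∈ p ∧ IPStar s.2.1}
  have key : ∀ s : St, ∃ K : Finset ℕ, K.Nonempty ∧ (∀ i ∈ s.1.2.2, ∀ j ∈ K, i < j) ∧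
      (∑ t ∈ K, x t) ∈ s.1.1 ∧ (∑ t ∈ K, x t) ∈ s.1.2.1 ∧
      {m | (∑ t ∈ K, x t) + m ∈ s.1.1} ∈ p := by
    rintro ⟨⟨B, D, F⟩, hB, hD⟩
    have hB2 : {m : ℕ | {m' : ℕ | m + m' ∈ B} ∈ p} ∈ p := by
      rw [← mem_uadd, hp]; exact hB
    obtain ⟨m, ⟨⟨⟨K, k1, k2, rfl⟩, hm2⟩, hm3⟩, hm4⟩ := Ultrafilter.nonempty_of_mem
      (inter_mem (inter_mem (inter_mem (hT (F.sup id + 1)) hB) (hD p hpos hp)) hB2)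
    refine ⟨K, k1, ?_, hm2, hm3, hm4⟩
    intro i hi j hj
    have a2 : i ≤ F.sup id := Finset.le_sup (f := id) hi
    have := k2 j hj
    omega
  choose K K1 K2 K3 K4 K5 using key
  have ypos : ∀ s, 0 < ∑ t ∈ K s, x t := fun s => Finset.sum_pos (fun i _ => hx i) (K1 s)
  let nxt : St → St := fun s =>
    ⟨(s.1.1 ∩ {m | (∑ t ∈ K s, x t) + m ∈ s.1.1},
      s.1.2.1 ∩ {m | (∑ t ∈ K s, x t) * m ∈ s.1.2.1}, K s),
      inter_mem s.2.1 (K5 s), s.2.2.and (s.2.2.scale (ypos s))⟩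
  let st : ℕ → St := fun n => Nat.rec ⟨(A, A, ∅), hA p hpos hp, hA⟩ (fun _ s => nxt s) n
  refine ⟨fun n => ∑ t ∈ K (st n), x t, ⟨fun n => K (st n), fun n => K1 _, ?_, fun n => rfl⟩, ?_⟩
  · intro n i hi j hj
    exact K2 (st (n+1)) i hi j hj
  · rintro s (⟨H, hH, rfl⟩ | ⟨H, hH, rfl⟩)
    · exact sum_mem_chain _ (fun n => (st n).1.1) (fun n => K3 _) (fun n => subset_rfl) H hH 0
        (by simp)
    · exact prod_mem_chain _ (fun n => (st n).1.2.1) (fun n => K4 _) (fun n => subset_rfl) H hH 0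
        (by simp)
end

section
/- Let u, v ∈ ℕ, let M be a u × v finite matrix with entries from ℚ that is image partition regular over ℕ, and let N be an infinite (ω × ω) matrix that is image partition regular near 0 over a dense subsemigroup S of ((0, ∞), +). Then the block diagonal matrix ( M 0 ; 0 N ) is image partition regular near 0 over S. -/
/-- `M` (a `u × v` matrix over ℚ) is image partition regular over the positive
integers: for every finite partition of the positive integers there exist a cell `E i`
and a vector `x⃗` of positive integers with all entries of `Mx⃗` in `E i`. -/
def IPRoverN (u v : ℕ) (M : Matrix (Fin u) (Fin v) ℚ) : Prop :=
  ∀ (r : ℕ) (E : Fin r → Set ℕ), (∀ n : ℕ, 0 < n → ∃ i, n ∈ E i) →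
    ∃ (i : Fin r) (x : Fin v → ℕ), (∀ j, 0 < x j) ∧
      ∀ a : Fin u, ∃ n ∈ E i, M.mulVec (fun j => (x j : ℚ)) a = (n : ℚ)

/-- The `a`-th entry of `N·y` for an `ω × ω` matrix `N` over ℚ (with finitely many
nonzero entries in each row) and a real vector `y`. -/
noncomputable def rowEntry (N : ℕ → ℕ → ℚ) (y : ℕ → ℝ) (a : ℕ) : ℝ :=
  ∑ᶠ j, (N a j : ℝ) * y j

/-- `N` is image partition regular near 0 over `S`: for every finite partition of `S`
and every `ε > 0` there are a cell `E i` and a vector `y⃗` with entries from `S` such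
that all entries of `Ny⃗` lie in `E i ∩ (0, ε)`. -/
def IPRNearZero (S : Set ℝ) (N : ℕ → ℕ → ℚ) : Prop :=
  ∀ (r : ℕ) (E : Fin r → Set ℝ), (∀ i, E i ⊆ S) → (∀ s ∈ S, ∃ i, s ∈ E i) →
    ∀ ε > (0 : ℝ),
      ∃ (i : Fin r) (y : ℕ → ℝ), (∀ j, y j ∈ S) ∧
        ∀ a : ℕ, rowEntry N y a ∈ E i ∩ Set.Ioo 0 ε

theorem aux_compact (u v : ℕ) (M : Matrix (Fin u) (Fin v) ℚ) (hM : IPRoverN u v M) (r : ℕ) :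
    ∃ n : ℕ, ∀ c : ℕ → Fin r, ∃ (i : Fin r) (x : Fin v → ℕ), (∀ j, 0 < x j) ∧
      ∀ a : Fin u, ∃ m : ℕ, 0 < m ∧ m ≤ n ∧ c m = i ∧
        M.mulVec (fun j => (x j : ℚ)) a = (m : ℚ) := by
  by_contra hcon
  push Not at hcon
  choose c hc using hcon
  have hlim : ∀ t : ℕ, ∃ i : Fin r, ∀ᶠ n in (Filter.hyperfilter ℕ : Filter ℕ), c n t = i := by
    intro t
    have h : ∀ᶠ n in (Filter.hyperfilter ℕ : Filter ℕ), ∃ i ∈ (Set.univ : Set (Fin r)), c n t = i :=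
      Filter.Eventually.of_forall fun n => ⟨c n t, trivial, rfl⟩
    obtain ⟨i, -, hi⟩ := (Ultrafilter.eventually_exists_mem_iff Set.finite_univ).1 h
    exact ⟨i, hi⟩
  choose d hd using hlim
  obtain ⟨i, x, hx, hm⟩ := hM r (fun i => {t | 0 < t ∧ d t = i}) (fun t ht => ⟨d t, ht, rfl⟩)
  choose m hm1 hm2 using hm
  have h1 : ∀ᶠ n in (Filter.hyperfilter ℕ : Filter ℕ), ∀ a, c n (m a) = i ∧ m a ≤ n := by
    rw [Filter.eventually_all]
    intro a
    have h2 : ∀ᶠ n in (Filter.hyperfilter ℕ : Filter ℕ), m a ≤ n :=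
      Filter.Eventually.filter_mono Nat.hyperfilter_le_atTop (Filter.eventually_ge_atTop (m a))
    filter_upwards [hd (m a), h2] with n hn hn2
    exact ⟨hn.trans (hm1 a).2, hn2⟩
  obtain ⟨n, hn⟩ := h1.exists
  obtain ⟨a, ha⟩ := hc n i x hx
  exact ha (m a) (hm1 a).1 (hn a).2 (hn a).1 (hm2 a)

theorem aux_mul_mem (S : Set ℝ) (hSadd : ∀ a ∈ S, ∀ b ∈ S, a + b ∈ S) (s : ℝ) (hs : s ∈ S)
    (t : ℕ) (ht : 0 < t) : (t : ℝ) * s ∈ S := by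
  induction t, ht using Nat.le_induction with
  | base => simpa using hs
  | succ k hk ih =>
    have := hSadd _ ih _ hs
    push_cast
    rwa [add_mul, one_mul]

theorem aux_row (N : ℕ → ℕ → ℚ) (y : ℕ → ℝ) (a : ℕ) (t : ℝ) :
    rowEntry N (fun j => t * y j) a = t * rowEntry N y a := by
  unfold rowEntry
  rw [← smul_eq_mul t, smul_finsum]
  congr 1
  ext j
  simp only [smul_eq_mul]
  ring

/-- If `M` is a finite `u × v` matrix over ℚ that is image partition
regular over ℕ, and `N` is an `ω × ω` matrix that is image partition regular near 0
over a dense subsemigroup `S` of `((0, ∞), +)`, then the block diagonal matrix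
`(M 0; 0 N)` — acting on `(x⃗; y⃗)` by `(Mx⃗; Ny⃗)` — is image partition regular near 0
over `S`. -/
theorem block_diagonal_iprNearZero (S : Set ℝ)
    (hSpos : S ⊆ Set.Ioi 0)
    (hSadd : ∀ a ∈ S, ∀ b ∈ S, a + b ∈ S)
    (hSdense : ∀ x ∈ Set.Ioi (0 : ℝ), ∀ ε > 0, ∃ s ∈ S, |x - s| < ε)
    (u v : ℕ) (M : Matrix (Fin u) (Fin v) ℚ) (hM : IPRoverN u v M)
    (N : ℕ → ℕ → ℚ) (hNrow : ∀ a, {j | N a j ≠ 0}.Finite)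
    (hN : IPRNearZero S N) :
    ∀ (r : ℕ) (E : Fin r → Set ℝ), (∀ i, E i ⊆ S) → (∀ s ∈ S, ∃ i, s ∈ E i) →
      ∀ ε > (0 : ℝ),
        ∃ (i : Fin r) (x : Fin v → ℝ) (y : ℕ → ℝ),
          (∀ j, x j ∈ S) ∧ (∀ j, y j ∈ S) ∧
          (∀ a : Fin u, (M.map ((↑) : ℚ → ℝ)).mulVec x a ∈ E i ∩ Set.Ioo 0 ε) ∧
          (∀ a : ℕ, rowEntry N y a ∈ E i ∩ Set.Ioo 0 ε) := by
  intro r E hES hcov ε hε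
  obtain ⟨s1, hs1, -⟩ := hSdense 1 (by simp) 1 one_pos
  have : Nonempty (Fin r) := ⟨(hcov s1 hs1).choose⟩
  have hχ : ∀ s : ℝ, ∃ i : Fin r, s ∈ S → s ∈ E i := by
    intro s
    by_cases h : s ∈ S
    · obtain ⟨i, hi⟩ := hcov s h
      exact ⟨i, fun _ => hi⟩
    · exact ⟨Classical.arbitrary _, fun h' => absurd h' h⟩
  choose χ hχ using hχ
  obtain ⟨n, hn⟩ := aux_compact u v M hM r
  let e := Fintype.equivFin (Fin (n + 2) → Fin r)
  have hn0 : (0 : ℝ) < (n : ℝ) + 1 := by positivity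
  obtain ⟨k, y, hyS, hy⟩ := hN _
    (fun k => {s | s ∈ S ∧ e (fun t : Fin (n + 2) => χ (((t : ℕ) : ℝ) * s)) = k})
    (fun k s hs => hs.1) (fun s hs => ⟨_, hs, rfl⟩) (ε / ((n : ℝ) + 1)) (by positivity)
  have hrS : ∀ a, rowEntry N y a ∈ S := fun a => (hy a).1.1
  have hsmall : ∀ (t : ℕ) (a : ℕ), 0 < t → t ≤ n + 1 →
      (t : ℝ) * rowEntry N y a ∈ Set.Ioo 0 ε := by
    intro t a ht htn
    have h1 := (hy a).2.1
    have h2 := (hy a).2.2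
    rw [lt_div_iff₀ hn0] at h2
    have ht' : (0 : ℝ) < t := by exact_mod_cast ht
    have htn' : (t : ℝ) ≤ n + 1 := by exact_mod_cast htn
    refine ⟨by positivity, ?_⟩
    nlinarith
  have hconst : ∀ (t : ℕ) (a : ℕ), t ≤ n + 1 →
      χ ((t : ℝ) * rowEntry N y a) = χ ((t : ℝ) * rowEntry N y 0) := by
    intro t a ht
    have h := e.injective ((hy a).1.2.trans (hy 0).1.2.symm)
    exact congrFun h ⟨t, by omega⟩
  obtain ⟨i, x, hx, hm⟩ := hn (fun t => χ ((t : ℝ) * rowEntry N y 0))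
  choose m hm0 hmn hmi hmx using hm
  have ht0 : ∃ t : ℕ, 0 < t ∧ t ≤ n + 1 ∧
      ∀ a, χ ((m a : ℝ) * rowEntry N y 0) = χ ((t : ℝ) * rowEntry N y 0) := by
    rcases isEmpty_or_nonempty (Fin u) with h | ⟨⟨b⟩⟩
    · exact ⟨1, one_pos, by omega, fun a => h.elim a⟩
    · exact ⟨m b, hm0 b, (hmn b).trans (by omega), fun a => (hmi a).trans (hmi b).symm⟩
  obtain ⟨t, ht, htn, hta⟩ := ht0
  refine ⟨χ ((t : ℝ) * rowEntry N y 0), fun j => (x j : ℝ) * rowEntry N y 0,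
    fun j => (t : ℝ) * y j, fun j => aux_mul_mem S hSadd _ (hrS 0) _ (hx j),
    fun j => aux_mul_mem S hSadd _ (hyS j) _ ht, ?_, ?_⟩
  · intro a
    have key : (M.map ((↑) : ℚ → ℝ)).mulVec (fun j => (x j : ℝ) * rowEntry N y 0) a
        = (m a : ℝ) * rowEntry N y 0 := by
      have h := congrArg ((↑) : ℚ → ℝ) (hmx a)
      simp only [Matrix.mulVec, dotProduct, Matrix.map_apply] at h ⊢
      push_cast at h
      rw [← h, Finset.sum_mul]
      exact Finset.sum_congr rfl fun j _ => by ring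
    rw [key]
    refine ⟨?_, hsmall _ _ (hm0 a) ((hmn a).trans (by omega))⟩
    rw [← hta a]
    exact hχ _ (aux_mul_mem S hSadd _ (hrS 0) _ (hm0 a))
  · intro a
    rw [aux_row]
    refine ⟨?_, hsmall _ _ ht htn⟩
    rw [← hconst t a htn]
    exact hχ _ (aux_mul_mem S hSadd _ (hrS a) _ ht)
end
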